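/- arXiv:math/0110223 — 2 statements merged into one kernel-verified Lean document; each statement's English description precedes it below -/
import Mathlib

section
/- Let p be an odd prime, H a Hopf algebra over k of index p, and ω ∈ k a primitive p-th root of unity. Then for each j ∈ Z_p there exists an integer d_j such that dim H^ω_{0,i,j} − dim H^ω_{1,i,j} = d_j for every i ∈ Z_p (that is, this difference of dimensions is independent of i). -/
open scoped TensorProduct

/-- A group-like element of a coalgebra: a nonzero element `a` with `Δ a = a ⊗ a`. -/
def IsGroupLike (k : Type*) {H : Type*} [CommSemiring k] [AddCommMonoid H] [Module k H]
    [Coalgebra k H] (a : H) : Prop :=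
  a ≠ 0 ∧ Coalgebra.comul (R := k) a = a ⊗ₜ[k] a

/-- The convolution product on the dual of a coalgebra. -/
noncomputable def conv {k H : Type*} [CommSemiring k] [AddCommMonoid H] [Module k H]
    [Coalgebra k H] (f g : Module.Dual k H) : Module.Dual k H :=
  LinearMap.mul' k k ∘ₗ TensorProduct.map f g ∘ₗ Coalgebra.comul

/-- `l ∈ H*` is a right integral of `H*`: `l * β = β(1) • l` for the convolution product. -/
def IsRightIntegralDual (k : Type*) {H : Type*} [CommSemiring k] [Semiring H]
    [HopfAlgebra k H] (l : Module.Dual k H) : Prop :=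
  ∀ f : Module.Dual k H, conv l f = f 1 • l

/-- `Λ ∈ H` is a left integral of `H`: `a * Λ = ε(a) • Λ` for all `a`. -/
def IsLeftIntegral (k : Type*) {H : Type*} [CommSemiring k] [Semiring H]
    [HopfAlgebra k H] (L : H) : Prop :=
  ∀ a : H, a * L = Coalgebra.counit (R := k) a • L

/-- `Λ ∈ H` is a right integral of `H`: `Λ * a = ε(a) • Λ` for all `a`. -/
def IsRightIntegral (k : Type*) {H : Type*} [CommSemiring k] [Semiring H]
    [HopfAlgebra k H] (L : H) : Prop :=
  ∀ a : H, L * a = Coalgebra.counit (R := k) a • L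

/-- `g` is the distinguished group-like element of `H`: it is group-like and
`β * λ = β(g) • λ` for some nonzero right integral `λ` of `H*`. -/
def IsDistinguishedGroupLike (k : Type*) {H : Type*} [CommSemiring k] [Semiring H]
    [HopfAlgebra k H] (g : H) : Prop :=
  IsGroupLike k g ∧ ∃ l : Module.Dual k H, l ≠ 0 ∧ IsRightIntegralDual k l ∧
    ∀ f : Module.Dual k H, conv f l = f g • l

/-- `α` is the distinguished group-like element of `H*`: an algebra map `H → k` with
`Λ * a = α(a) • Λ` for some nonzero left integral `Λ` of `H`. -/
def IsDistinguishedGroupLikeDual (k : Type*) {H : Type*} [CommSemiring k] [Semiring H]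
    [HopfAlgebra k H] (α : H →ₐ[k] k) : Prop :=
  ∃ L : H, L ≠ 0 ∧ IsLeftIntegral k L ∧ ∀ a : H, L * a = α a • L

/-- `IsHopfIndex k g n` : `n` is the index of the Hopf algebra `H` with distinguished
group-like element `g`, i.e. the smallest positive integer `n` with `S ^ (4 n) = id` and
`g ^ n = 1`, where `S` is the antipode. -/
def IsHopfIndex (k : Type*) {H : Type*} [CommSemiring k] [Semiring H] [HopfAlgebra k H]
    (g : H) (n : ℕ) : Prop :=
  0 < n ∧ (HopfAlgebra.antipode (R := k) (A := H) : Module.End k H) ^ (4 * n) = 1 ∧ g ^ n = 1 ∧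
    ∀ m : ℕ, 0 < m → (HopfAlgebra.antipode (R := k) (A := H) : Module.End k H) ^ (4 * m) = 1 →
      g ^ m = 1 → n ≤ m

/-- The simultaneous eigenspace `H^ω_{a,i,j} = {u ∈ H | S² u = (-1)^a ω^i • u, u * g = ω^j • u}`
for `(a,i,j) ∈ ℤ/2 × ℤ/n × ℤ/n`. -/
noncomputable def hopfEigenspace {k H : Type*} [CommRing k] [Ring H] [HopfAlgebra k H]
    (g : H) (ω : k) {n : ℕ} (t : ZMod 2 × ZMod n × ZMod n) : Submodule k H :=
  Module.End.eigenspace ((HopfAlgebra.antipode (R := k) (A := H) : Module.End k H) ^ 2)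
      ((-1 : k) ^ t.1.val * ω ^ t.2.1.val) ⊓
    Module.End.eigenspace (LinearMap.mulRight k g : Module.End k H) (ω ^ t.2.2.val)

/-- Convolution powers of an element of the dual; the zeroth power is the counit,
the unit of the convolution algebra. -/
noncomputable def convPow {k H : Type*} [CommSemiring k] [AddCommMonoid H] [Module k H]
    [Coalgebra k H] (f : Module.Dual k H) : ℕ → Module.Dual k H
  | 0 => Coalgebra.counit
  | m + 1 => conv f (convPow f m)

section Slices

open Coalgebra HopfAlgebra

variable {k H : Type*} [Field k] [Ring H] [HopfAlgebra k H]

/-- The slice map `x ⊗ y ↦ f x • y`. -/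
noncomputable def sliceLeft (f : Module.Dual k H) : H ⊗[k] H →ₗ[k] H :=
  TensorProduct.lid k H ∘ₗ f.rTensor H

/-- The slice map `x ⊗ y ↦ f y • x`. -/
noncomputable def sliceRight (f : Module.Dual k H) : H ⊗[k] H →ₗ[k] H :=
  TensorProduct.rid k H ∘ₗ f.lTensor H

@[simp]
lemma sliceLeft_tmul (f : Module.Dual k H) (x y : H) : sliceLeft f (x ⊗ₜ[k] y) = f x • y := by
  simp [sliceLeft]

@[simp]
lemma sliceRight_tmul (f : Module.Dual k H) (x y : H) : sliceRight f (x ⊗ₜ[k] y) = f y • x := by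
  simp [sliceRight]

lemma sliceLeft_counit_comul (x : H) :
    sliceLeft (counit : Module.Dual k H) (comul (R := k) x) = x := by
  simp [sliceLeft]

lemma sliceRight_counit_comul (x : H) :
    sliceRight (counit : Module.Dual k H) (comul (R := k) x) = x := by
  simp [sliceRight]

lemma sliceLeft_mul_one_tmul (f : Module.Dual k H) (t : H ⊗[k] H) (c : H) :
    sliceLeft f (t * (1 ⊗ₜ c)) = sliceLeft f t * c := by
  induction t with
  | zero => simp
  | tmul x y => simp
  | add s t hs ht => simp [add_mul, hs, ht]

lemma sliceRight_tmul_one_mul (f : Module.Dual k H) (t : H ⊗[k] H) (c : H) :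
    sliceRight f ((c ⊗ₜ 1) * t) = c * sliceRight f t := by
  induction t with
  | zero => simp
  | tmul x y => simp
  | add s t hs ht => simp [mul_add, hs, ht]

lemma sliceLeft_mul_tmul_one (f : Module.Dual k H) (t : H ⊗[k] H) (b : H) :
    sliceLeft f (t * (b ⊗ₜ 1)) = sliceLeft (f ∘ₗ LinearMap.mulRight k b) t := by
  induction t with
  | zero => simp
  | tmul x y => simp
  | add s t hs ht => simp [add_mul, hs, ht]

lemma sliceRight_one_tmul_mul (f : Module.Dual k H) (t : H ⊗[k] H) (a : H) :
    sliceRight f ((1 ⊗ₜ a) * t) = sliceRight (f ∘ₗ LinearMap.mulLeft k a) t := by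
  induction t with
  | zero => simp
  | tmul x y => simp
  | add s t hs ht => simp [mul_add, hs, ht]

lemma sum_comul_mul_one_tmul_antipode {ι : Type*} {b : H} (r : Repr k b ι) :
    ∑ i ∈ r.index, comul (R := k) (r.left i) * (1 ⊗ₜ antipode k (r.right i)) = b ⊗ₜ[k] 1 := by
  have h := congr((LinearMap.mul' k H ∘ₗ (antipode k).lTensor H).lTensor H
    $(coassoc_apply (R := k) b))
  rw [← r.eq] at h
  simp only [map_sum, LinearMap.rTensor_tmul, LinearMap.lTensor_tmul, LinearMap.comp_apply,
    mul_antipode_lTensor_comul_apply] at h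
  have h2 : ∀ (t : H ⊗[k] H) (y : H), (LinearMap.mul' k H ∘ₗ (antipode k).lTensor H).lTensor H
      (TensorProduct.assoc k H H H (t ⊗ₜ y)) = t * (1 ⊗ₜ antipode k y) := by
    intro t y
    induction t with
    | zero => simp
    | tmul x z => simp
    | add s t hs ht => simp only [TensorProduct.add_tmul, map_add, hs, ht, add_mul]
  simp only [h2] at h
  rw [h]
  simp only [Algebra.algebraMap_eq_smul_one, ← TensorProduct.smul_tmul, ← TensorProduct.sum_tmul]
  congr 1
  simpa [← r.eq] using sliceRight_counit_comul (k := k) b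

lemma sum_antipode_tmul_one_mul_comul {ι : Type*} {a : H} (r : Repr k a ι) :
    ∑ i ∈ r.index, (antipode k (r.left i) ⊗ₜ 1) * comul (R := k) (r.right i) = 1 ⊗ₜ[k] a := by
  have h := congr((LinearMap.mul' k H ∘ₗ (antipode k).rTensor H).rTensor H
    $(coassoc_symm_apply (R := k) a))
  rw [← r.eq] at h
  simp only [map_sum, LinearMap.rTensor_tmul, LinearMap.lTensor_tmul, LinearMap.comp_apply,
    mul_antipode_rTensor_comul_apply] at h
  have h2 : ∀ (t : H ⊗[k] H) (y : H), (LinearMap.mul' k H ∘ₗ (antipode k).rTensor H).rTensor H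
      ((TensorProduct.assoc k H H H).symm (y ⊗ₜ t)) = (antipode k y ⊗ₜ 1) * t := by
    intro t y
    induction t with
    | zero => simp
    | tmul x z => simp
    | add s t hs ht => simp only [TensorProduct.tmul_add, map_add, hs, ht, mul_add]
  simp only [h2] at h
  rw [h]
  simp only [Algebra.algebraMap_eq_smul_one, TensorProduct.smul_tmul, ← TensorProduct.tmul_sum]
  congr 1
  simpa [← r.eq] using sliceLeft_counit_comul (k := k) a

/-- If `l(x₁) x₂ = l(x) 1` for all `x`, then `l(a₁ b) a₂ = l(a b₁) S(b₂)`. -/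
lemma sliceLeft_comp_mulRight_comul {l : Module.Dual k H}
    (hl : ∀ x, sliceLeft l (comul (R := k) x) = l x • 1) (a b : H) :
    sliceLeft (l ∘ₗ LinearMap.mulRight k b) (comul (R := k) a) =
      antipode k (sliceLeft (l ∘ₗ LinearMap.mulLeft k a) (comul (R := k) b)) := by
  rw [← sliceLeft_mul_tmul_one, ← sum_comul_mul_one_tmul_antipode (ℛ k b), Finset.mul_sum, map_sum]
  conv_rhs => rw [← (ℛ k b).eq]
  simp [← mul_assoc, ← Bialgebra.comul_mul, sliceLeft_mul_one_tmul, hl]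

/-- If `l(x₂) x₁ = l(x) 1` for all `x`, then `l(a₂ b) S(a₁) = l(a b₂) b₁`. -/
lemma antipode_sliceRight_comp_mulRight_comul {l : Module.Dual k H}
    (hl : ∀ x, sliceRight l (comul (R := k) x) = l x • 1) (a b : H) :
    antipode k (sliceRight (l ∘ₗ LinearMap.mulRight k b) (comul (R := k) a)) =
      sliceRight (l ∘ₗ LinearMap.mulLeft k a) (comul (R := k) b) := by
  rw [← sliceRight_one_tmul_mul, ← sum_antipode_tmul_one_mul_comul (ℛ k a), Finset.sum_mul, map_sum]
  conv_lhs => rw [← (ℛ k a).eq]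
  simp [mul_assoc, ← Bialgebra.comul_mul, sliceRight_tmul_one_mul, hl]

lemma apply_sliceLeft_comul (l f : Module.Dual k H) (x : H) :
    f (sliceLeft l (comul (R := k) x)) = conv l f x := by
  simp only [conv, LinearMap.comp_apply]
  rw [← (ℛ k x).eq]
  simp

lemma apply_sliceRight_comul (l f : Module.Dual k H) (x : H) :
    f (sliceRight l (comul (R := k) x)) = conv f l x := by
  simp only [conv, LinearMap.comp_apply]
  rw [← (ℛ k x).eq]
  simp [mul_comm]

lemma IsRightIntegralDual.sliceLeft_comul {l : Module.Dual k H} (hl : IsRightIntegralDual k l)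
    (x : H) : sliceLeft l (comul (R := k) x) = l x • 1 := by
  refine (Module.forall_dual_apply_eq_zero_iff k _).mp (fun f => ?_) |> sub_eq_zero.mp
  rw [map_sub, apply_sliceLeft_comul, hl f]
  simp [mul_comm]

lemma sliceRight_comul_of_conv {l : Module.Dual k H} {g : H}
    (hl : ∀ f : Module.Dual k H, conv f l = f g • l)
    (x : H) : sliceRight l (comul (R := k) x) = l x • g := by
  refine (Module.forall_dual_apply_eq_zero_iff k _).mp (fun f => ?_) |> sub_eq_zero.mp
  rw [map_sub, apply_sliceRight_comul, hl f]
  simp [mul_comm]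

end Slices

section Integrals

open Coalgebra HopfAlgebra

variable {k H : Type*} [Field k] [Ring H] [HopfAlgebra k H] [FiniteDimensional k H]

/-- The bilinear form `(a, b) ↦ l(ab)` of a nonzero right integral `l` is nondegenerate. -/
lemma eq_zero_of_forall_apply_mul_eq_zero {l : Module.Dual k H} (hl0 : l ≠ 0)
    (hl : ∀ x, sliceLeft l (comul (R := k) x) = l x • 1) {a : H} (ha : ∀ b, l (a * b) = 0) :
    a = 0 := by
  have exists_comul_eq_sum : ∀ x : H, (∀ b, l (x * b) = 0) → ∃ (ι : Type) (s : Finset ι)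
      (c e : ι → H), comul (R := k) x = ∑ i ∈ s, c i ⊗ₜ[k] e i ∧ ∀ i ∈ s, ∀ b, l (c i * b) = 0 := by
    intro x hx
    let e := Module.finBasis k H
    obtain ⟨c, hc⟩ := TensorProduct.eq_repr_basis_right e (comul (R := k) x)
    rw [Finsupp.sum_fintype _ _ (by simp)] at hc
    refine ⟨_, Finset.univ, c, e, hc.symm, fun i _ b => ?_⟩
    have h := sliceLeft_comp_mulRight_comul hl x b
    have h0 : l ∘ₗ LinearMap.mulLeft k x = 0 := by ext; simp [hx]
    have h1 : ∀ t : H ⊗[k] H, sliceLeft (0 : Module.Dual k H) t = 0 := by simp [sliceLeft]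
    rw [h0, h1, map_zero, ← hc] at h
    simp only [map_sum, sliceLeft_tmul, LinearMap.comp_apply, LinearMap.mulRight_apply] at h
    exact Fintype.linearIndependent_iff.mp e.linearIndependent _ h i
  have hε : ∀ x : H, (∀ b, l (x * b) = 0) → counit (R := k) x = 0 := by
    intro x hx
    obtain ⟨ι, s, c, e, hce, hc⟩ := exists_comul_eq_sum x hx
    by_contra hne
    refine hl0 (LinearMap.ext fun y => ?_)
    have h := congr(l ($(mul_antipode_lTensor_comul_apply (R := k) x) * y))
    rw [hce] at h
    simpa [Finset.sum_mul, mul_assoc, Finset.sum_congr rfl (fun i hi => hc i hi _),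
      Algebra.algebraMap_eq_smul_one, hne] using h.symm
  obtain ⟨ι, s, c, e, hce, hc⟩ := exists_comul_eq_sum a ha
  rw [← sliceLeft_counit_comul (k := k) a, hce, map_sum]
  exact Finset.sum_eq_zero fun i hi => by simp [hε _ (hc i hi)]

lemma exists_comp_mulLeft_eq {l : Module.Dual k H} (hl0 : l ≠ 0)
    (hl : ∀ x, sliceLeft l (comul (R := k) x) = l x • 1) (f : Module.Dual k H) :
    ∃ a : H, l ∘ₗ LinearMap.mulLeft k a = f := by
  let φ : H →ₗ[k] Module.Dual k H := (LinearMap.mul k H).compr₂ l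
  have hφ : Function.Injective φ := by
    refine (injective_iff_map_eq_zero φ).mpr fun a ha => ?_
    exact eq_zero_of_forall_apply_mul_eq_zero hl0 hl fun b => congr($ha b)
  obtain ⟨a, ha⟩ := (LinearMap.injective_iff_surjective_of_finrank_eq_finrank
    Subspace.dual_finrank_eq.symm).mp hφ f
  exact ⟨a, LinearMap.ext fun b => congr($ha b)⟩

lemma exists_comp_mulRight_eq {l : Module.Dual k H} (hl0 : l ≠ 0)
    (hl : ∀ x, sliceLeft l (comul (R := k) x) = l x • 1) (f : Module.Dual k H) :
    ∃ a : H, l ∘ₗ LinearMap.mulRight k a = f := by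
  let φ : H →ₗ[k] Module.Dual k H := (LinearMap.mul k H).flip.compr₂ l
  have hφ : Function.Injective φ := by
    refine (injective_iff_map_eq_zero φ).mpr fun a ha => ?_
    refine (Module.forall_dual_apply_eq_zero_iff k a).mp fun f => ?_
    obtain ⟨b, rfl⟩ := exists_comp_mulLeft_eq hl0 hl f
    exact congr($ha b)
  obtain ⟨a, ha⟩ := (LinearMap.injective_iff_surjective_of_finrank_eq_finrank
    Subspace.dual_finrank_eq.symm).mp hφ f
  exact ⟨a, LinearMap.ext fun b => congr($ha b)⟩

/-- Radford's trace formula for `S²` followed by right multiplication by `a`. -/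
lemma trace_mulRight_comp_antipode_sq {l : Module.Dual k H}
    (hl : ∀ x, sliceLeft l (comul (R := k) x) = l x • 1) {L : H}
    (hL : l ∘ₗ LinearMap.mulLeft k L = counit) (a : H) :
    LinearMap.trace k H (LinearMap.mulRight k a * antipode k ^ 2) = counit (R := k) L * l a := by
  have h : LinearMap.mulRight k a * antipode k ^ 2 = ∑ i ∈ (ℛ k L).index,
      (l ∘ₗ LinearMap.mulLeft k ((ℛ k L).left i)).smulRight
        (antipode k ((ℛ k L).right i) * a) := by
    ext b
    have h := sliceLeft_comp_mulRight_comul hl L b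
    rw [hL, sliceLeft_counit_comul, ← (ℛ k L).eq] at h
    simp [pow_two, ← h]
  rw [h]
  simp only [map_sum, LinearMap.trace_smulRight, LinearMap.comp_apply, LinearMap.mulLeft_apply,
    ← mul_assoc]
  rw [← map_sum, ← Finset.sum_mul, sum_mul_antipode_eq_smul]
  simp

lemma isRightIntegral_of_comp_mulLeft_eq_counit {l : Module.Dual k H} (hl0 : l ≠ 0)
    (hl : ∀ x, sliceLeft l (comul (R := k) x) = l x • 1) {L : H}
    (hL : l ∘ₗ LinearMap.mulLeft k L = counit) : IsRightIntegral k L := by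
  have hLmul : ∀ b, l (L * b) = counit (R := k) b := fun b => congr($hL b)
  refine fun a => sub_eq_zero.mp (eq_zero_of_forall_apply_mul_eq_zero hl0 hl fun b => ?_)
  simp [sub_mul, mul_assoc, hLmul]

/-- If `l` is a nonzero two-sided integral of `H*` whose associated right integral `L` of `H`
satisfies `ε(L) ≠ 0`, then `S⁴ = id`. -/
lemma antipode_pow_four_eq_one {l : Module.Dual k H} (hl0 : l ≠ 0)
    (hl : ∀ x, sliceLeft l (comul (R := k) x) = l x • 1)
    (hr : ∀ x, sliceRight l (comul (R := k) x) = l x • 1) {L : H}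
    (hL : l ∘ₗ LinearMap.mulLeft k L = counit) (hε : counit (R := k) L ≠ 0) :
    (antipode k : Module.End k H) ^ 4 = 1 := by
  have hLmul : ∀ b, l (L * b) = counit (R := k) b := fun b => congr($hL b)
  have hint := isRightIntegral_of_comp_mulLeft_eq_counit hl0 hl hL
  have hL₁ : l L = 1 := by simpa using hLmul 1
  have hmul : ∀ a, a * L = l (a * L) • L := fun a => by
    refine sub_eq_zero.mp (eq_zero_of_forall_apply_mul_eq_zero hl0 hl fun b => ?_)
    simp [sub_mul, mul_assoc, hint b, hL₁, mul_comm (counit b)]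
  have hmulRight : l ∘ₗ LinearMap.mulRight k L = counit := by
    ext a
    have h := congr(l (L * $(hmul a)))
    rw [← mul_assoc, hint a] at h
    simp only [smul_mul_assoc, mul_smul_comm, map_smul, hLmul, smul_eq_mul] at h
    exact (mul_right_cancel₀ hε h).symm
  ext a
  obtain ⟨n, hn⟩ := exists_comp_mulRight_eq hl0 hl (l ∘ₗ LinearMap.mulLeft k a)
  have h₁ := sliceLeft_comp_mulRight_comul hl L n
  have h₂ := antipode_sliceRight_comp_mulRight_comul hr a L
  have h₃ := sliceLeft_comp_mulRight_comul hl a L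
  have h₄ := antipode_sliceRight_comp_mulRight_comul hr L n
  rw [hL, hn, sliceLeft_counit_comul] at h₁
  rw [hmulRight, sliceRight_counit_comul] at h₂
  rw [hmulRight, sliceLeft_counit_comul, h₁] at h₃
  rw [hL, hn, sliceRight_counit_comul, ← h₂] at h₄
  simp [pow_succ, h₄, ← h₃]

end Integrals

section LinearAlgebra

/-- A vanishing integral combination of the powers of a primitive root of unity of prime order
has constant coefficients. -/
lemma IsPrimitiveRoot.eq_of_sum_intCast_mul_pow_eq_zero {k : Type*} [Field k] [CharZero k] {p : ℕ}
    (hp : p.Prime) {ω : k} (hω : IsPrimitiveRoot ω p) (x : ℕ → ℤ)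
    (hx : ∑ i ∈ Finset.range p, (x i : k) * ω ^ i = 0) {i : ℕ} (hi : i < p) :
    x i = x (p - 1) := by
  have := Fact.mk hp
  obtain ⟨q, rfl⟩ : ∃ q, p = q + 1 := ⟨p - 1, by have := hp.pos; omega⟩
  simp only [Nat.add_sub_cancel]
  let Q : Polynomial ℚ :=
    ∑ i ∈ Finset.range q, Polynomial.monomial i ((x i - x q : ℤ) : ℚ)
  have hroot : Polynomial.aeval ω Q = 0 := by
    have hgeom := hω.geom_sum_eq_zero hp.one_lt
    have hsum : ∑ i ∈ Finset.range (q + 1), ((x i - x q : ℤ) : k) * ω ^ i = 0 := by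
      simp only [Int.cast_sub, sub_mul, Finset.sum_sub_distrib, hx, ← Finset.mul_sum, hgeom,
        mul_zero, sub_zero]
    rw [Finset.sum_range_succ] at hsum
    simpa [Q, Polynomial.aeval_monomial, sub_mul] using hsum
  have hQ : Q = 0 := by
    have hdvd := minpoly.dvd ℚ ω hroot
    rw [← Polynomial.cyclotomic_eq_minpoly_rat hω hp.pos] at hdvd
    refine Polynomial.eq_zero_of_dvd_of_degree_lt hdvd ?_
    rw [Polynomial.degree_cyclotomic, Nat.totient_prime hp, Nat.add_sub_cancel]
    refine (Polynomial.degree_sum_le _ _).trans_lt ?_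
    refine (Finset.sup_lt_iff (WithBot.bot_lt_coe q)).mpr fun i hi => ?_
    exact (Polynomial.degree_monomial_le _ _).trans_lt
      (Nat.cast_lt.mpr (Finset.mem_range.mp hi))
  rcases Nat.lt_succ_iff_lt_or_eq.mp hi with hi | rfl
  · have hc := congr(Polynomial.coeff $hQ i)
    simp only [Q, Polynomial.finsetSum_coeff, Polynomial.coeff_monomial, Finset.sum_ite_eq',
      Finset.mem_range, hi, if_true, Polynomial.coeff_zero, Int.cast_eq_zero] at hc
    omega
  · rfl

variable {k V : Type*} [Field k] [AddCommGroup V] [Module k V]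

/-- The trace of a semisimple endomorphism is the sum of its nonzero eigenvalues with
multiplicity. -/
lemma Module.End.IsSemisimple.trace_eq_sum [FiniteDimensional k V] [IsAlgClosed k]
    {T : Module.End k V}
    (hT : T.IsSemisimple) (s : Finset k) (hs : ∀ μ, T.HasEigenvalue μ → μ ≠ 0 → μ ∈ s) :
    LinearMap.trace k V T = ∑ μ ∈ s, μ * (Module.finrank k (T.eigenspace μ) : k) := by
  classical
  have hint : DirectSum.IsInternal T.eigenspace :=
    DirectSum.isInternal_submodule_of_iSupIndep_of_iSup_eq_top T.eigenspaces_iSupIndep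
      hT.iSup_eigenspace_eq_top
  have hfin : {μ | T.eigenspace μ ≠ ⊥}.Finite :=
    WellFoundedGT.finite_ne_bot_of_iSupIndep T.eigenspaces_iSupIndep
  have hmaps : ∀ μ, Set.MapsTo T (T.eigenspace μ) (T.eigenspace μ) := fun μ x hx => by
    rw [SetLike.mem_coe] at hx ⊢
    rw [Module.End.mem_eigenspace_iff.mp hx]
    exact Submodule.smul_mem _ _ hx
  have htrace : ∀ μ, LinearMap.trace k (T.eigenspace μ) (T.restrict (hmaps μ)) =
      μ * (Module.finrank k (T.eigenspace μ) : k) := fun μ => by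
    have h : T.restrict (hmaps μ) = μ • (1 : Module.End k (T.eigenspace μ)) := by
      ext x
      exact Module.End.mem_eigenspace_iff.mp x.2
    rw [h, map_smul, LinearMap.trace_one, smul_eq_mul]
  rw [LinearMap.trace_eq_sum_trace_restrict' hint hfin hmaps]
  simp only [htrace]
  refine (Finset.sum_subset Finset.subset_union_left fun μ _ hμ => ?_).trans
    (Finset.sum_subset (s₂ := hfin.toFinset ∪ s) Finset.subset_union_right fun μ hμ hμs => ?_).symm
  · have : T.eigenspace μ = ⊥ := by simpa using hμ
    rw [this, finrank_bot, Nat.cast_zero, mul_zero]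
  · have hμ' : T.HasEigenvalue μ := by
      rw [Finset.mem_union, Set.Finite.mem_toFinset] at hμ
      exact hμ.resolve_right hμs
    by_cases h0 : μ = 0
    · simp [h0]
    · exact absurd (hs μ hμ' h0) hμs

lemma Module.End.isSemisimple_of_pow_eq_one [CharZero k] {F : Module.End k V} {n : ℕ} (hn : n ≠ 0)
    (hF : F ^ n = 1) : F.IsSemisimple :=
  Module.End.isSemisimple_of_squarefree_aeval_eq_zero
    (Polynomial.separable_X_pow_sub_C (1 : k) (Nat.cast_ne_zero.mpr hn) one_ne_zero).squarefree
    (by simp [hF])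

lemma IsPrimitiveRoot.exists_pow_or_neg_pow_of_pow_two_mul_eq_one {p : ℕ} (hp : Odd p) {ω : k}
    (hω : IsPrimitiveRoot ω p) {μ : k} (hμ : μ ^ (2 * p) = 1) :
    ∃ i < p, μ = ω ^ i ∨ μ = -ω ^ i := by
  have : NeZero p := ⟨hp.pos.ne'⟩
  rw [mul_comm, pow_mul, sq_eq_one_iff] at hμ
  rcases hμ with hμ | hμ
  · obtain ⟨i, hi, h⟩ := hω.eq_pow_of_pow_eq_one hμ
    exact ⟨i, hi, Or.inl h.symm⟩
  · obtain ⟨i, hi, h⟩ := hω.eq_pow_of_pow_eq_one (ξ := -μ) (by rw [hp.neg_pow, hμ, neg_neg])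
    exact ⟨i, hi, Or.inr (by rw [h, neg_neg])⟩

/-- Let `F`, `G` commute with `F ^ (2p) = 1`, `G ^ p = 1`, and let all `G ^ m * F` be traceless.
On each eigenspace of `G`, the trace of `F` vanishes. -/
lemma sum_finrank_eigenspace_inf_eigenspace_mul_pow_eq_zero [FiniteDimensional k V]
    [IsAlgClosed k] [CharZero k] {p : ℕ}
    (hp : Odd p) {ω : k} (hω : IsPrimitiveRoot ω p) {F G : Module.End k V} (hFG : Commute F G)
    (hF : F ^ (2 * p) = 1) (hG : G ^ p = 1)
    (htr : ∀ m : ℕ, LinearMap.trace k V (G ^ m * F) = 0) {c : k} (hc : c ^ p = 1) :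
    ∑ i ∈ Finset.range p,
      (((Module.finrank k ↥(F.eigenspace (ω ^ i) ⊓ G.eigenspace c) : ℤ) -
        (Module.finrank k ↥(F.eigenspace (-ω ^ i) ⊓ G.eigenspace c) : ℤ) : ℤ) : k) * ω ^ i = 0 := by
  classical
  have hp0 : p ≠ 0 := hp.pos.ne'
  have : NeZero p := ⟨hp0⟩
  have hpk : (p : k) ≠ 0 := Nat.cast_ne_zero.mpr hp0
  have hc0 : c ≠ 0 := by rintro rfl; simp [hp0] at hc
  let q : Polynomial k := ∑ m ∈ Finset.range p, Polynomial.monomial m ((p : k)⁻¹ * c⁻¹ ^ m)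
  let P : Module.End k V := Polynomial.aeval G q
  have hP : P = (p : k)⁻¹ • ∑ m ∈ Finset.range p, (c⁻¹ • G) ^ m := by
    simp [P, q, Polynomial.aeval_monomial, Finset.smul_sum, smul_pow,
      Algebra.algebraMap_eq_smul_one, smul_smul]
  have hGP : G * P = c • P := by
    have h : (c⁻¹ • G - 1) * P = 0 := by
      rw [hP, mul_smul_comm, mul_geom_sum, smul_pow, hG, inv_pow, hc]
      simp
    rw [sub_mul, one_mul, sub_eq_zero, smul_mul_assoc] at h
    rw [← inv_smul_eq_iff₀ hc0, h]
  have hPu : ∀ u, G u = c • u → P u = u := fun u hu => by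
    have h : ∀ m : ℕ, ((c⁻¹ • G) ^ m) u = u := fun m => by
      induction m with
      | zero => simp
      | succ m ih => simp [pow_succ, hu, smul_smul, hc0, ih]
    simp [hP, LinearMap.sum_apply, h, ← Nat.cast_smul_eq_nsmul k, smul_smul, hpk]
  have hPF : Commute P F := by
    rw [hP]
    exact (Commute.sum_left _ _ _ fun i _ => (hFG.symm.smul_left _).pow_left i).smul_left _
  have htr0 : LinearMap.trace k V (P * F) = 0 := by
    simp only [hP, smul_mul_assoc, Finset.sum_mul, smul_pow, map_smul, map_sum, htr, smul_zero,
      Finset.sum_const_zero]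
  have hss : (P * F).IsSemisimple :=
    ((Module.End.isSemisimple_of_pow_eq_one hp0 hG).aeval q).mul_of_commute hPF
      (Module.End.isSemisimple_of_pow_eq_one (mul_ne_zero two_ne_zero hp0) hF)
  have heig : ∀ μ : k, μ ≠ 0 →
      (P * F).eigenspace μ = F.eigenspace μ ⊓ G.eigenspace c := fun μ hμ => by
    ext u
    simp only [Submodule.mem_inf, Module.End.mem_eigenspace_iff, Module.End.mul_apply]
    constructor
    · intro hu
      have hGu : G u = c • u := by
        have h := congr(G $hu)
        rw [← Module.End.mul_apply, hGP, LinearMap.smul_apply, hu, map_smul, smul_comm] at h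
        exact (smul_right_injective V hμ h).symm
      refine ⟨?_, hGu⟩
      rw [← hu, ← Module.End.mul_apply, hPF.eq, Module.End.mul_apply, hPu u hGu]
    · rintro ⟨hFu, hGu⟩
      rw [hFu, map_smul, hPu u hGu]
  have hω0 : ω ≠ 0 := hω.ne_zero hp0
  have hinj : Set.InjOn (fun i => ω ^ i) (Finset.range p : Set ℕ) := fun i hi j hj h =>
    hω.pow_inj (by simpa using hi) (by simpa using hj) h
  let s₁ : Finset k := (Finset.range p).image fun i => ω ^ i
  let s₂ : Finset k := (Finset.range p).image fun i => -ω ^ i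
  have hdisj : Disjoint s₁ s₂ := by
    simp only [s₁, s₂, Finset.disjoint_left, Finset.mem_image, not_exists]
    rintro _ ⟨i, -, rfl⟩ j ⟨-, h⟩
    have h' := congr($h ^ p)
    rw [hp.neg_pow, ← pow_mul, ← pow_mul, mul_comm, pow_mul, mul_comm, pow_mul, hω.pow_eq_one,
      one_pow, one_pow] at h'
    exact self_ne_neg.mpr one_ne_zero h'.symm
  have hs : ∀ μ, (P * F).HasEigenvalue μ → μ ≠ 0 → μ ∈ s₁ ∪ s₂ := fun μ hμ hμ0 => by
    obtain ⟨u, hu, hu0⟩ := hμ.exists_hasEigenvector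
    change u ∈ (P * F).eigenspace μ at hu
    rw [heig μ hμ0] at hu
    have hpow : ∀ m : ℕ, (F ^ m) u = μ ^ m • u := fun m => by
      induction m with
      | zero => simp
      | succ m ih =>
        rw [pow_succ, Module.End.mul_apply, Module.End.mem_eigenspace_iff.mp hu.1, map_smul, ih,
          smul_smul, pow_succ']
    have hμp : μ ^ (2 * p) = 1 := by
      have h := hpow (2 * p)
      rw [hF, Module.End.one_apply] at h
      exact smul_left_injective k hu0 (by simpa using h.symm)
    obtain ⟨i, hi, h | h⟩ := hω.exists_pow_or_neg_pow_of_pow_two_mul_eq_one hp hμp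
    · exact Finset.mem_union_left _ (Finset.mem_image.mpr ⟨i, Finset.mem_range.mpr hi, h.symm⟩)
    · exact Finset.mem_union_right _ (Finset.mem_image.mpr ⟨i, Finset.mem_range.mpr hi, h.symm⟩)
  rw [hss.trace_eq_sum _ hs, Finset.sum_union hdisj, Finset.sum_image hinj,
    Finset.sum_image fun i hi j hj h => hinj hi hj (neg_injective h), ← Finset.sum_add_distrib]
    at htr0
  rw [← htr0]
  refine Finset.sum_congr rfl fun i _ => ?_
  rw [heig _ (pow_ne_zero i hω0), heig _ (neg_ne_zero.mpr (pow_ne_zero i hω0))]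
  push_cast
  ring

end LinearAlgebra

section DistinguishedGroupLike

open Coalgebra HopfAlgebra

variable {k H : Type*} [Field k] [Ring H] [HopfAlgebra k H]

lemma IsGroupLike.isGroupLikeElem {a : H} (ha : IsGroupLike k a) : IsGroupLikeElem k a := by
  refine ⟨?_, ha.2⟩
  have h := sliceLeft_counit_comul (k := k) a
  rw [ha.2, sliceLeft_tmul] at h
  exact smul_left_injective k ha.1 (by simpa using h)

lemma commute_antipode_sq_mulRight {g : H} (hg : IsGroupLikeElem k g) :
    Commute ((antipode k : Module.End k H) ^ 2) (LinearMap.mulRight k g) := by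
  ext x
  simp [pow_two, antipode_mul_antidistrib, hg.antipode_antipode]

/-- If the index of `H` is greater than `1`, then `S²` followed by right multiplication by any
power of the distinguished group-like element is traceless. -/
lemma trace_mulRight_pow_mul_antipode_sq_eq_zero [FiniteDimensional k H] {g : H}
    (hg : IsDistinguishedGroupLike k g) {n : ℕ} (hn : 1 < n) (hidx : IsHopfIndex k g n) (m : ℕ) :
    LinearMap.trace k H (LinearMap.mulRight k g ^ m * antipode k ^ 2) = 0 := by
  obtain ⟨hgl, l, hl0, hl, hlg⟩ := hg
  have hleft := hl.sliceLeft_comul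
  have hright := sliceRight_comul_of_conv hlg
  obtain ⟨L, hL⟩ := exists_comp_mulLeft_eq hl0 hleft counit
  rw [LinearMap.pow_mulRight, trace_mulRight_comp_antipode_sq hleft hL]
  by_contra hne
  have hε := left_ne_zero_of_mul hne
  have hlm := right_ne_zero_of_mul hne
  have hgm : g ^ m = 1 := by
    have h := hleft (g ^ m)
    rw [hgl.isGroupLikeElem.pow.comul_eq_tmul_self, sliceLeft_tmul] at h
    exact smul_right_injective H hlm h
  have hg1 : g = 1 := by
    have h := hright 1
    rw [Bialgebra.comul_one, Algebra.TensorProduct.one_def, sliceRight_tmul] at h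
    rw [hgm] at hlm
    exact (smul_right_injective H hlm h).symm
  subst hg1
  have hS := antipode_pow_four_eq_one hl0 hleft hright hL hε
  exact hn.not_ge (hidx.2.2.2 1 one_pos (by simpa using hS) (one_pow 1))

lemma hopfEigenspace_zero (g : H) (ω : k) {n : ℕ} (i j : ZMod n) :
    hopfEigenspace g ω ((0 : ZMod 2), i, j) =
      Module.End.eigenspace ((antipode k : Module.End k H) ^ 2) (ω ^ i.val) ⊓
        Module.End.eigenspace (LinearMap.mulRight k g) (ω ^ j.val) := by
  simp [hopfEigenspace]

lemma hopfEigenspace_one (g : H) (ω : k) {n : ℕ} (i j : ZMod n) :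
    hopfEigenspace g ω ((1 : ZMod 2), i, j) =
      Module.End.eigenspace ((antipode k : Module.End k H) ^ 2) (-ω ^ i.val) ⊓
        Module.End.eigenspace (LinearMap.mulRight k g) (ω ^ j.val) := by
  simp [hopfEigenspace, ZMod.val_one]

end DistinguishedGroupLike

/-- Lemma 5.5. Let `p` be an odd prime, `H` a Hopf algebra of index `p` over
an algebraically closed field of characteristic `0`, and `ω` a primitive `p`-th root of unity.
Then for each `j ∈ ℤ/p` there is an integer `d_j` with
`dim H^ω_{0,i,j} − dim H^ω_{1,i,j} = d_j` for every `i ∈ ℤ/p`. -/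
theorem stmt7 (k : Type*) [Field k] [IsAlgClosed k] [CharZero k]
    (p : ℕ) (hp : p.Prime) (hpodd : Odd p)
    (H : Type*) [Ring H] [HopfAlgebra k H] [FiniteDimensional k H]
    (g : H) (hg : IsDistinguishedGroupLike k g) (hidx : IsHopfIndex k g p)
    (ω : k) (hω : IsPrimitiveRoot ω p) :
    ∀ j : ZMod p, ∃ d : ℤ, ∀ i : ZMod p,
      (Module.finrank k (hopfEigenspace g ω ((0 : ZMod 2), i, j)) : ℤ) -
        (Module.finrank k (hopfEigenspace g ω ((1 : ZMod 2), i, j)) : ℤ) = d := by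
  have : NeZero p := ⟨hp.ne_zero⟩
  intro j
  have hF : ((HopfAlgebra.antipode k : Module.End k H) ^ 2) ^ (2 * p) = 1 := by
    rw [← pow_mul, ← hidx.2.1]
    ring_nf
  have hG : (LinearMap.mulRight k g) ^ p = 1 := by
    rw [LinearMap.pow_mulRight, hidx.2.2.1, LinearMap.mulRight_one]
    rfl
  have hsum := sum_finrank_eigenspace_inf_eigenspace_mul_pow_eq_zero hpodd hω
    (commute_antipode_sq_mulRight hg.1.isGroupLikeElem) hF hG
    (trace_mulRight_pow_mul_antipode_sq_eq_zero hg hp.one_lt hidx) (c := ω ^ j.val)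
    (by rw [← pow_mul, mul_comm, pow_mul, hω.pow_eq_one, one_pow])
  have h := fun i : ZMod p => hω.eq_of_sum_intCast_mul_pow_eq_zero hp _ hsum i.val_lt
  refine ⟨_, fun i => Eq.trans ?_ (h i)⟩
  rw [hopfEigenspace_zero, hopfEigenspace_one]
end

section
/- Let H be a Hopf algebra over k of odd index n, ω ∈ k a primitive n-th root of unity, g and α the distinguished group-like elements of H and H* respectively, and x an integer with α(g) = ω^x. Let Λ be a left integral of H. Then Δ(Λ) lies in the subspace Σ_{(a,i,j) ∈ Z_2 × Z_n × Z_n} H^ω_{(a,i,j)} ⊗ H^ω_{−(a,i,j)+(0,−x,x)} of H ⊗ H, where addition and negation of triples are taken in the group Z_2 × Z_n × Z_n. -/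
open scoped TensorProduct

section HopfIntegrals

open Coalgebra Bialgebra HopfAlgebra WithConv
open scoped RingTheory.LinearMap

section ConvolutionInclusions

variable (k H : Type*) [CommRing k] [Ring H] [HopfAlgebra k H]

/-- The map `c ↦ c ⊗ 1`, in the convolution algebra of linear maps `H → H ⊗ H`. -/
noncomputable def convInl : WithConv (H →ₗ[k] H ⊗[k] H) :=
  toConv (Algebra.TensorProduct.includeLeft (R := k) (S := k) (A := H) (B := H)).toLinearMap

/-- The map `c ↦ 1 ⊗ c`, in the convolution algebra of linear maps `H → H ⊗ H`. -/
noncomputable def convInr : WithConv (H →ₗ[k] H ⊗[k] H) :=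
  toConv (Algebra.TensorProduct.includeRight (R := k) (A := H) (B := H)).toLinearMap

/-- The map `c ↦ S c ⊗ 1`, in the convolution algebra of linear maps `H → H ⊗ H`. -/
noncomputable def convInlAntipode : WithConv (H →ₗ[k] H ⊗[k] H) :=
  toConv ((Algebra.TensorProduct.includeLeft (R := k) (S := k) (A := H) (B := H)).toLinearMap ∘ₗ
    antipode k)

/-- The map `c ↦ 1 ⊗ S c`, in the convolution algebra of linear maps `H → H ⊗ H`. -/
noncomputable def convInrAntipode : WithConv (H →ₗ[k] H ⊗[k] H) :=
  toConv ((Algebra.TensorProduct.includeRight (R := k) (A := H) (B := H)).toLinearMap ∘ₗ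
    antipode k)

variable {k H}

@[simp] lemma convInl_apply (c : H) : convInl k H c = c ⊗ₜ[k] 1 := rfl
@[simp] lemma convInr_apply (c : H) : convInr k H c = 1 ⊗ₜ[k] c := rfl
@[simp] lemma convInlAntipode_apply (c : H) :
    convInlAntipode k H c = antipode k c ⊗ₜ[k] 1 := rfl
@[simp] lemma convInrAntipode_apply (c : H) :
    convInrAntipode k H c = 1 ⊗ₜ[k] antipode k c := rfl

variable (k H)

lemma convInl_mul_convInr : convInl k H * convInr k H = toConv comul := by
  ext c
  rw [(ℛ k c).convMul_apply]
  simp [(ℛ k c).eq]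

lemma algHom_comp_convOne (h : H →ₐ[k] H ⊗[k] H) :
    toConv (h.toLinearMap ∘ₗ (1 : WithConv (H →ₗ[k] H)).ofConv) = 1 := by
  ext c
  simp [LinearMap.convOne_def]

lemma convInlAntipode_mul_convInl : convInlAntipode k H * convInl k H = 1 := by
  have h := LinearMap.algHom_comp_convMul_distrib
    (Algebra.TensorProduct.includeLeft (R := k) (S := k) (A := H) (B := H))
    (toConv (antipode k (A := H))) (toConv LinearMap.id)
  rw [LinearMap.antipode_mul_id] at h
  exact (congrArg toConv h.symm).trans (algHom_comp_convOne k H _)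

lemma convInrAntipode_mul_convInr : convInrAntipode k H * convInr k H = 1 := by
  have h := LinearMap.algHom_comp_convMul_distrib
    (Algebra.TensorProduct.includeRight (R := k) (A := H) (B := H))
    (toConv (antipode k (A := H))) (toConv LinearMap.id)
  rw [LinearMap.antipode_mul_id] at h
  exact (congrArg toConv h.symm).trans (algHom_comp_convOne k H _)

lemma convInr_mul_convInrAntipode : convInr k H * convInrAntipode k H = 1 := by
  have h := LinearMap.algHom_comp_convMul_distrib
    (Algebra.TensorProduct.includeRight (R := k) (A := H) (B := H))
    (toConv LinearMap.id) (toConv (antipode k (A := H)))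
  rw [LinearMap.id_mul_antipode] at h
  exact (congrArg toConv h.symm).trans (algHom_comp_convOne k H _)

variable {k H}

/-- The antipode is anti-comultiplicative. -/
lemma comul_antipode (c : H) :
    comul (R := k) (antipode k c) =
      TensorProduct.map (antipode k) (antipode k) (TensorProduct.comm k H H (comul c)) := by
  have hinv : (convInrAntipode k H * convInlAntipode k H) * toConv comul = 1 := by
    rw [← convInl_mul_convInr, mul_assoc, ← mul_assoc (convInlAntipode k H),
      convInlAntipode_mul_convInl, one_mul, convInrAntipode_mul_convInr]
  have h := left_inv_eq_right_inv hinv (LinearMap.comul_right_inv (R := k) (C := H))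
  have hc : (convInrAntipode k H * convInlAntipode k H) c = comul (R := k) (antipode k c) := by
    rw [h]; rfl
  rw [← hc, (ℛ k c).convMul_apply]
  conv_rhs => rw [← (ℛ k c).eq]
  simp

lemma comul_antipode_antipode (c : H) :
    comul (R := k) (antipode k (antipode k c)) =
      TensorProduct.map (antipode k ∘ₗ antipode k) (antipode k ∘ₗ antipode k) (comul c) := by
  rw [comul_antipode, comul_antipode, ← (ℛ k c).eq]
  simp

/-- `S(a)Λ₁ ⊗ Λ₂ = Λ₁ ⊗ aΛ₂` for a left integral `Λ`. -/
lemma IsLeftIntegral.antipode_tmul_one_mul_comul {L : H} (hL : IsLeftIntegral k L) (a : H) :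
    (antipode k a ⊗ₜ[k] (1 : H)) * comul L = ((1 : H) ⊗ₜ[k] a) * comul L := by
  have h : convInlAntipode k H * toConv comul = convInr k H := by
    rw [← convInl_mul_convInr, ← mul_assoc, convInlAntipode_mul_convInl, one_mul]
  rw [← convInr_apply, ← h, (ℛ k a).convMul_apply, Finset.sum_mul]
  have h2 (i) : (convInlAntipode k H ((ℛ k a).left i) *
      (toConv (comul (R := k) (A := H))) ((ℛ k a).right i)) * comul L =
      (antipode k ((counit (R := k) ((ℛ k a).right i)) • (ℛ k a).left i) ⊗ₜ[k] (1 : H)) *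
        comul L := by
    rw [mul_assoc]
    change _ * (comul (R := k) _ * comul L) = _
    rw [← Bialgebra.comul_mul, hL]
    rw [map_smul, map_smul, ← TensorProduct.smul_tmul', mul_smul_comm, smul_mul_assoc,
      convInlAntipode_apply]
  simp_rw [h2]
  rw [← Finset.sum_mul, ← TensorProduct.sum_tmul, ← map_sum]
  congr
  have := congrArg (TensorProduct.rid k H) (sum_tmul_counit_eq (ℛ k a))
  simpa [-sum_tmul_counit_eq, map_sum] using this.symm

end ConvolutionInclusions

section Contractions

variable {k H : Type*} [CommRing k] [Ring H] [HopfAlgebra k H]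

/-- The contraction `u ⊗ v ↦ l(u) v`. -/
noncomputable def contractFst (l : Module.Dual k H) : H ⊗[k] H →ₗ[k] H :=
  TensorProduct.lid k H ∘ₗ l.rTensor H

/-- The contraction `u ⊗ v ↦ l(v) u`. -/
noncomputable def contractSnd (l : Module.Dual k H) : H ⊗[k] H →ₗ[k] H :=
  TensorProduct.rid k H ∘ₗ l.lTensor H

@[simp] lemma contractFst_tmul (l : Module.Dual k H) (u v : H) :
    contractFst l (u ⊗ₜ[k] v) = l u • v := by simp [contractFst]

@[simp] lemma contractSnd_tmul (l : Module.Dual k H) (u v : H) :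
    contractSnd l (u ⊗ₜ[k] v) = l v • u := by simp [contractSnd]

lemma contractFst_one_tmul_mul (l : Module.Dual k H) (v : H) (z : H ⊗[k] H) :
    contractFst l ((1 ⊗ₜ[k] v) * z) = v * contractFst l z := by
  induction z with
  | zero => simp
  | tmul a b => simp
  | add x y hx hy => simp [mul_add, hx, hy]

lemma contractFst_mul_one_tmul (l : Module.Dual k H) (v : H) (z : H ⊗[k] H) :
    contractFst l (z * (1 ⊗ₜ[k] v)) = contractFst l z * v := by
  induction z with
  | zero => simp
  | tmul a b => simp
  | add x y hx hy => simp [add_mul, hx, hy]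

lemma contractSnd_tmul_one_mul (l : Module.Dual k H) (v : H) (z : H ⊗[k] H) :
    contractSnd l ((v ⊗ₜ[k] 1) * z) = v * contractSnd l z := by
  induction z with
  | zero => simp
  | tmul a b => simp
  | add x y hx hy => simp [mul_add, hx, hy]

lemma contractSnd_comp_mulLeft (l : Module.Dual k H) (v : H) (z : H ⊗[k] H) :
    contractSnd (l ∘ₗ LinearMap.mulLeft k v) z = contractSnd l ((1 ⊗ₜ[k] v) * z) := by
  induction z with
  | zero => simp
  | tmul a b => simp
  | add x y hx hy => simp [mul_add, hx, hy]

lemma apply_contractFst (l m : Module.Dual k H) (z : H ⊗[k] H) :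
    m (contractFst l z) = l (contractSnd m z) := by
  induction z with
  | zero => simp
  | tmul a b => simp [mul_comm]
  | add x y hx hy => simp [hx, hy]

lemma conv_apply_eq_contractFst (l m : Module.Dual k H) (h : H) :
    conv l m h = m (contractFst l (comul h)) := by
  rw [conv, LinearMap.comp_apply, LinearMap.comp_apply]
  generalize comul (R := k) h = z
  induction z with
  | zero => simp
  | tmul a b => simp
  | add x y hx hy => simp [hx, hy]

end Contractions

section Field

variable {k H : Type*} [Field k] [Ring H] [HopfAlgebra k H]

lemma IsGroupLike.isGroupLikeElem_s11 {g : H} (hg : IsGroupLike k g) : IsGroupLikeElem k g where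
  counit_eq_one := by
    have h := congrArg (TensorProduct.lid k H) (rTensor_counit_comul (R := k) g)
    rw [hg.2] at h
    simp only [LinearMap.rTensor_tmul, TensorProduct.lid_tmul, one_smul] at h
    exact smul_left_injective k hg.1 (by simpa using h)
  comul_eq_tmul_self := hg.2

lemma IsRightIntegralDual.contractFst_comul {l : Module.Dual k H}
    (hl : IsRightIntegralDual k l) (h : H) :
    contractFst l (comul h) = l h • (1 : H) := by
  rw [← sub_eq_zero, ← Module.forall_dual_apply_eq_zero_iff k]
  intro f
  have := LinearMap.congr_fun (hl f) h
  rw [conv_apply_eq_contractFst] at this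
  simp [this, mul_comm]

lemma contractSnd_comul_of_conv_eq_smul {l : Module.Dual k H} {g : H}
    (hl : ∀ f : Module.Dual k H, conv f l = f g • l) (h : H) :
    contractSnd l (comul h) = l h • g := by
  rw [← sub_eq_zero, ← Module.forall_dual_apply_eq_zero_iff k]
  intro f
  have := LinearMap.congr_fun (hl f) h
  rw [conv_apply_eq_contractFst, apply_contractFst] at this
  simp [this, mul_comm]

/-- `λ(a₁ b) a₂ = λ(a b₁) S(b₂)` for a right integral `λ` of the dual. -/
lemma IsRightIntegralDual.contractFst_comul_mul_tmul_one {l : Module.Dual k H}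
    (hl : IsRightIntegralDual k l) (a b : H) :
    contractFst l (comul a * (b ⊗ₜ[k] 1)) =
      antipode k (contractFst l ((a ⊗ₜ[k] 1) * comul b)) := by
  have h : toConv comul * convInrAntipode k H = convInl k H := by
    rw [← convInl_mul_convInr, mul_assoc, convInr_mul_convInrAntipode, mul_one]
  rw [← convInl_apply, ← h, (ℛ k b).convMul_apply, Finset.mul_sum, map_sum]
  conv_rhs => rw [← (ℛ k b).eq, Finset.mul_sum, map_sum, map_sum]
  refine Finset.sum_congr rfl fun i _ => ?_
  change contractFst l (comul a * (comul ((ℛ k b).left i) * _)) = _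
  rw [← mul_assoc, ← Bialgebra.comul_mul, convInrAntipode_apply, contractFst_mul_one_tmul,
    hl.contractFst_comul]
  simp

/-- A nonzero right integral of the dual is a nondegenerate functional. -/
lemma IsRightIntegralDual.eq_zero_of_forall_apply_mul {l : Module.Dual k H}
    (hl : IsRightIntegralDual k l) (hl0 : l ≠ 0) {a : H} (ha : ∀ b, l (a * b) = 0) : a = 0 := by
  classical
  let e := Module.Basis.ofVectorSpace k H
  have hcoef : ∀ a : H, (∀ b, l (a * b) = 0) → ∃ c : (Module.Basis.ofVectorSpaceIndex k H) →₀ H,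
      comul (R := k) a = c.sum (fun i u => u ⊗ₜ[k] e i) ∧ ∀ i b, l (c i * b) = 0 := by
    intro a ha
    obtain ⟨c, hc⟩ := TensorProduct.eq_repr_basis_right e (comul (R := k) a)
    refine ⟨c, hc.symm, fun i b => ?_⟩
    have hzero : contractFst l (comul a * (b ⊗ₜ[k] 1)) = 0 := by
      rw [hl.contractFst_comul_mul_tmul_one]
      have : contractFst l ((a ⊗ₜ[k] 1) * comul b) = 0 := by
        rw [← (ℛ k b).eq, Finset.mul_sum, map_sum]
        exact Finset.sum_eq_zero fun j _ => by simp [ha]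
      rw [this, map_zero]
    rw [← hc, Finsupp.sum, Finset.sum_mul, map_sum] at hzero
    simp only [Algebra.TensorProduct.tmul_mul_tmul, mul_one, contractFst_tmul] at hzero
    by_cases hi : i ∈ c.support
    · exact linearIndependent_iff'.1 e.linearIndependent c.support (fun i => l (c i * b)) hzero i hi
    · simp [Finsupp.notMem_support_iff.1 hi]
  have hcounit : ∀ a : H, (∀ b, l (a * b) = 0) → counit (R := k) a = 0 := by
    intro a ha
    obtain ⟨c, hc, hc0⟩ := hcoef a ha
    by_contra hne
    refine hl0 (LinearMap.ext fun b => ?_)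
    have hS := mul_antipode_lTensor_comul_apply (R := k) a
    rw [hc, Finsupp.sum, map_sum, map_sum] at hS
    simp only [LinearMap.lTensor_tmul, LinearMap.mul'_apply] at hS
    have h2 := congrArg (fun y => l (y * b)) hS
    simp only [Finset.sum_mul, map_sum, mul_assoc, hc0, Finset.sum_const_zero] at h2
    rw [← Algebra.smul_def, map_smul, smul_eq_mul, eq_comm, mul_eq_zero] at h2
    exact h2.resolve_left hne
  obtain ⟨c, hc, hc0⟩ := hcoef a ha
  have h := congrArg (TensorProduct.lid k H) (rTensor_counit_comul (R := k) a)
  rw [hc, Finsupp.sum, map_sum, map_sum] at h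
  simpa [hcounit _ (hc0 _)] using h.symm

lemma contractFst_counit_comul (h : H) : contractFst counit (comul (R := k) h) = h := by
  simp [contractFst]

lemma IsLeftIntegral.contractFst_comul_mul_tmul_one {L : H} (hL : IsLeftIntegral k L)
    (l : Module.Dual k H) (a : H) :
    contractFst l (comul a * (L ⊗ₜ[k] 1)) = l L • a := by
  conv_rhs => rw [← contractFst_counit_comul (k := k) a]
  generalize comul (R := k) a = z
  induction z with
  | zero => simp
  | tmul u v => simp [hL u, mul_comm, mul_smul]
  | add x y hx hy => simp [add_mul, hx, hy]

/-- `λ(g b) = λ(S b)`, where `g` is the distinguished group-like element attached to `λ`. -/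
lemma IsRightIntegralDual.apply_mul_eq_apply_antipode {l : Module.Dual k H}
    (hl : IsRightIntegralDual k l) {g : H} (hg : IsGroupLikeElem k g)
    (hlg : ∀ f : Module.Dual k H, conv f l = f g • l)
    {L : H} (hL : IsLeftIntegral k L) (hlL : l L ≠ 0) (b : H) :
    l (g * b) = l (antipode k b) := by
  set m : Module.Dual k H := l ∘ₗ LinearMap.mulLeft k g with hm
  have hmint (h : H) : contractSnd m (comul h) = m h • (1 : H) := by
    have h1 := contractSnd_comul_of_conv_eq_smul hlg (g * h)
    rw [Bialgebra.comul_mul, hg.comul_eq_tmul_self,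
      show g ⊗ₜ[k] g = (g ⊗ₜ[k] (1 : H)) * ((1 : H) ⊗ₜ[k] g) by simp, mul_assoc,
      contractSnd_tmul_one_mul, ← contractSnd_comp_mulLeft] at h1
    calc contractSnd m (comul h) = antipode k g * (g * contractSnd m (comul h)) := by
          rw [← mul_assoc, hg.antipode_mul_cancel, one_mul]
      _ = m h • (1 : H) := by rw [hm, h1, mul_smul_comm, hg.antipode_mul_cancel]; rfl
  have h := congrArg (fun z => m (contractFst l z)) (hL.antipode_tmul_one_mul_comul b)
  rw [contractFst_one_tmul_mul, hl.contractFst_comul, apply_contractFst, contractSnd_tmul_one_mul,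
    hmint, mul_smul_comm, mul_one, mul_smul_comm, mul_one, map_smul, map_smul, smul_eq_mul,
    smul_eq_mul] at h
  have hmL : m L = l L := by simp [hm, hL g, hg.counit_eq_one]
  rw [hmL] at h
  exact (mul_left_cancel₀ hlL h).symm

variable [FiniteDimensional k H]

/-- A nonzero right integral of the dual does not vanish on nonzero left integrals. -/
lemma IsRightIntegralDual.apply_ne_zero {l : Module.Dual k H}
    (hl : IsRightIntegralDual k l) (hl0 : l ≠ 0) (hS : Function.Injective (antipode k (A := H)))
    {L : H} (hL : IsLeftIntegral k L) (hL0 : L ≠ 0) : l L ≠ 0 := by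
  intro hlL
  let T : H →ₗ[k] Module.Dual k H := (LinearMap.mul k H).compr₂ l
  have hT : Function.Injective T := by
    rw [← LinearMap.ker_eq_bot, LinearMap.ker_eq_bot']
    exact fun a ha => hl.eq_zero_of_forall_apply_mul hl0 fun b => LinearMap.congr_fun ha b
  have hTs : Function.Surjective T :=
    (LinearMap.injective_iff_surjective_of_finrank_eq_finrank
      (Subspace.dual_finrank_eq (K := k) (V := H)).symm).1 hT
  obtain ⟨a, ha⟩ := hTs counit
  apply hL0
  apply hS
  have h := hl.contractFst_comul_mul_tmul_one a L
  have h1 : contractFst l ((a ⊗ₜ[k] 1) * comul L) = L := by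
    have hz (z : H ⊗[k] H) : contractFst l ((a ⊗ₜ[k] 1) * z) = contractFst counit z := by
      rw [← ha]
      induction z with
      | zero => simp
      | tmul u v => simp [T]
      | add x y hx hy => simp [mul_add, hx, hy]
    rw [hz, contractFst_counit_comul]
  rw [h1, hL.contractFst_comul_mul_tmul_one, hlL, zero_smul] at h
  rw [← h, map_zero]

lemma IsLeftIntegral.exists_eq_smul (hS : Function.Injective (antipode k (A := H)))
    {l : Module.Dual k H} (hl : IsRightIntegralDual k l) (hl0 : l ≠ 0)
    {L M : H} (hL : IsLeftIntegral k L) (hL0 : L ≠ 0) (hM : IsLeftIntegral k M) :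
    M = (l M / l L) • L := by
  have hne := hl.apply_ne_zero hl0 hS hL hL0
  by_contra hcon
  refine hl.apply_ne_zero hl0 hS (L := M - (l M / l L) • L) (fun a => ?_) (sub_ne_zero.2 hcon) ?_
  · rw [mul_sub, mul_smul_comm, hL, hM, smul_sub, smul_comm]
  · simp [div_mul_cancel₀ _ hne]

lemma apply_antipode_leftIntegral {l : Module.Dual k H} (hl : IsRightIntegralDual k l)
    (hS : Function.Injective (antipode k (A := H)))
    {L : H} (hL : IsLeftIntegral k L) : l (antipode k L) = l L := by
  rcases eq_or_ne L 0 with rfl | hL0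
  · simp
  have hr : ∀ a, antipode k L * a = counit (R := k) a • antipode k L := by
    intro a
    obtain ⟨b, rfl⟩ := (LinearMap.injective_iff_surjective.1 hS) a
    rw [← antipode_mul_antidistrib, hL, map_smul, counit_antipode]
  have h := hl.contractFst_comul_mul_tmul_one (antipode k L) L
  have hz (z : H ⊗[k] H) : contractFst l ((antipode k L ⊗ₜ[k] 1) * z) =
      l (antipode k L) • contractFst counit z := by
    induction z with
    | zero => simp
    | tmul u v => simp [hr, mul_smul, smul_comm (counit (R := k) u)]
    | add x y hx hy => simp [mul_add, hx, hy]
  rw [hz, contractFst_counit_comul, hL.contractFst_comul_mul_tmul_one, map_smul] at h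
  refine (smul_left_injective k (fun h0 => hL0 (hS ?_)) h).symm
  rw [h0, map_zero]

/-- The square of the antipode acts on left integrals by `α(g)⁻¹`. -/
lemma IsLeftIntegral.antipode_antipode (hS : Function.Injective (antipode k (A := H)))
    {g : H} (hg : IsDistinguishedGroupLike k g) {α : H →ₐ[k] k}
    {L : H} (hL : IsLeftIntegral k L) (hα : ∀ a : H, L * a = α a • L) :
    antipode k (antipode k L) = (α g)⁻¹ • L := by
  obtain ⟨hgl, l, hl0, hl, hlg⟩ := hg
  have hg' := hgl.isGroupLikeElem_s11
  rcases eq_or_ne L 0 with rfl | hL0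
  · simp
  have hlL := hl.apply_ne_zero hl0 hS hL hL0
  have hαg : α (antipode k g) = (α g)⁻¹ := by
    refine eq_inv_of_mul_eq_one_left ?_
    rw [← map_mul, hg'.antipode_mul_cancel, map_one]
  have hSSL : IsLeftIntegral k (antipode k (antipode k L)) := by
    intro a
    obtain ⟨b, rfl⟩ := (LinearMap.injective_iff_surjective.1 hS) a
    obtain ⟨c, rfl⟩ := (LinearMap.injective_iff_surjective.1 hS) b
    rw [← antipode_mul_antidistrib, ← antipode_mul_antidistrib, hL, map_smul, map_smul,
      counit_antipode, counit_antipode]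
  rw [hL.exists_eq_smul hS hl hl0 hL0 hSSL, ← hl.apply_mul_eq_apply_antipode hg' hlg hL hlL]
  have hgS : g * antipode k L = (α g)⁻¹ • antipode k L := by
    conv_lhs => rw [← hg'.antipode_antipode]
    rw [← antipode_mul_antidistrib, hα, map_smul, hαg]
  rw [hgS, map_smul, apply_antipode_leftIntegral hl hS hL, smul_eq_mul, mul_div_cancel_right₀ _ hlL]

end Field

end HopfIntegrals

section Eigenprojections

open Polynomial

/-- An operator of finite order `m` is diagonalized by projections commuting with everything that
commutes with it, once the `m` distinct `m`-th roots of unity are given. -/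
lemma exists_eigenprojections {k V ι : Type*} [Field k] [AddCommGroup V] [Module k V]
    [Fintype ι] [Nonempty ι] (χ : ι → k) (hχ : Function.Injective χ)
    (hχ1 : ∀ i, χ i ^ Fintype.card ι = 1) (f : Module.End k V) (hf : f ^ Fintype.card ι = 1) :
    ∃ P : ι → Module.End k V, ∑ i, P i = 1 ∧ (∀ i, f * P i = χ i • P i) ∧
      ∀ h, Commute h f → ∀ i, Commute h (P i) := by
  classical
  have hnodal : Lagrange.nodal Finset.univ χ = X ^ Fintype.card ι - 1 := by
    have hm : 0 < Fintype.card ι := Fintype.card_pos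
    refine Polynomial.eq_of_degree_sub_lt_of_eval_index_eq (v := χ) Finset.univ hχ.injOn ?_ ?_
    · have h1 : (Lagrange.nodal Finset.univ χ).degree = (X ^ Fintype.card ι - 1 : k[X]).degree := by
        rw [Lagrange.degree_nodal, ← C_1, degree_X_pow_sub_C hm, Finset.card_univ]
      refine (degree_sub_lt_left h1 Lagrange.nodal_ne_zero ?_).trans_eq ?_
      · rw [Lagrange.nodal_monic.leadingCoeff, ← C_1, leadingCoeff_X_pow_sub_C hm]
      · rw [Lagrange.degree_nodal]
    · intro i _
      rw [Lagrange.eval_nodal_at_node (Finset.mem_univ i)]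
      simp [hχ1]
  refine ⟨fun i => aeval f (Lagrange.basis Finset.univ χ i), ?_, fun i => ?_, fun h hh i => ?_⟩
  · rw [← map_sum, Lagrange.sum_basis hχ.injOn Finset.univ_nonempty, map_one]
  · have h1 : (X - C (χ i)) * Lagrange.basis Finset.univ χ i =
        C (Lagrange.nodalWeight Finset.univ χ i) * (X ^ Fintype.card ι - 1) := by
      rw [← hnodal, Lagrange.basis_eq_prod_sub_inv_mul_nodal_div (Finset.mem_univ i),
        ← Lagrange.nodal_erase_eq_nodal_div (Finset.mem_univ i), mul_left_comm,
        ← Lagrange.nodal_eq_mul_nodal_erase (Finset.mem_univ i)]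
    have h2 := congrArg (aeval f) h1
    simp only [map_mul, map_sub, aeval_X, aeval_C, map_pow, map_one, hf, sub_self, mul_zero,
      sub_mul, sub_eq_zero] at h2
    rw [h2, Algebra.smul_def]
  · refine Polynomial.induction_on' (motive := fun p => Commute h (aeval f p)) _ ?_ ?_
    · intro p q hp hq
      rw [map_add]
      exact hp.add_right hq
    · intro m c
      rw [aeval_monomial]
      exact (Algebra.commute_algebraMap_right c h).mul_right (hh.pow_right m)

end Eigenprojections

section SignedRootsOfUnity

variable {k : Type*} [Field k] [CharZero k] {n : ℕ} {ω : k}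

lemma even_and_dvd_of_neg_one_pow_mul_zpow_eq_one (hn : Odd n) (hω : IsPrimitiveRoot ω n)
    {p : ℕ} {q : ℤ} (h : (-1 : k) ^ p * ω ^ q = 1) : Even p ∧ (n : ℤ) ∣ q := by
  have hp : Even p := by
    have h1 := congrArg (· ^ n) h
    simp only [mul_pow, one_pow] at h1
    rw [← zpow_natCast (ω ^ q), zpow_comm, zpow_natCast, hω.pow_eq_one, one_zpow, mul_one,
      ← pow_mul] at h1
    have h2 := (neg_one_pow_eq_one_iff_even (R := k) (by norm_num)).1 h1
    rcases Nat.even_mul.1 h2 with h3 | h3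
    · exact h3
    · exact absurd h3 (Nat.not_even_iff_odd.2 hn)
  rw [hp.neg_one_pow, one_mul] at h
  exact ⟨hp, (hω.zpow_eq_one_iff_dvd q).1 h⟩

lemma ZMod.eq_of_even_val_add_val {a b : ZMod 2} (h : Even (a.val + b.val)) : a = b := by
  revert a b
  decide

lemma injective_neg_one_pow_mul_pow_val (hn : Odd n) (hω : IsPrimitiveRoot ω n) :
    Function.Injective fun s : ZMod 2 × ZMod n => (-1 : k) ^ s.1.val * ω ^ s.2.val := by
  have : NeZero n := ⟨hn.pos.ne'⟩
  have hω0 : ω ≠ 0 := hω.ne_zero hn.pos.ne'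
  rintro ⟨a, i⟩ ⟨b, j⟩ h
  simp only at h
  have h1 : (-1 : k) ^ (a.val + b.val) * ω ^ ((i.val : ℤ) - j.val) = 1 := by
    rw [pow_add, zpow_sub₀ hω0, zpow_natCast, zpow_natCast, mul_div_assoc', mul_right_comm, h,
      mul_right_comm, ← mul_pow, neg_one_mul, neg_neg, one_pow, one_mul,
      div_self (pow_ne_zero _ hω0)]
  obtain ⟨h2, h3⟩ := even_and_dvd_of_neg_one_pow_mul_zpow_eq_one hn hω h1
  rw [Prod.mk.injEq]
  refine ⟨ZMod.eq_of_even_val_add_val h2, ?_⟩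
  rw [← ZMod.intCast_zmod_eq_zero_iff_dvd] at h3
  simpa [sub_eq_zero] using h3

end SignedRootsOfUnity

lemma antipode_sq_commute_mulRight {k H : Type*} [CommRing k] [Ring H] [HopfAlgebra k H] {g : H}
    (hg : IsGroupLikeElem k g) :
    Commute ((HopfAlgebra.antipode (R := k) (A := H) : Module.End k H) ^ 2)
      (LinearMap.mulRight k g) := by
  ext u
  simp [pow_two, HopfAlgebra.antipode_mul_antidistrib, hg.antipode_antipode]

lemma TensorProduct.map_mem_range_mapIncl {k V W : Type*} [CommRing k] [AddCommGroup V] [Module k V]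
    [AddCommGroup W] [Module k W] {E : Submodule k V} {F : Submodule k W} {p : Module.End k V}
    {q : Module.End k W} (hp : ∀ u, p u ∈ E) (hq : ∀ u, q u ∈ F) (z : V ⊗[k] W) :
    TensorProduct.map p q z ∈ LinearMap.range (TensorProduct.mapIncl E F) := by
  refine ⟨TensorProduct.map (p.codRestrict E hp) (q.codRestrict F hq) z, ?_⟩
  rw [TensorProduct.mapIncl, ← LinearMap.comp_apply, ← TensorProduct.map_comp]
  rfl

/-- A component of a tensor eigenvector can only be nonzero when the eigenvalues match. -/
lemma mul_eq_of_map_ne_zero {k V : Type*} [Field k] [AddCommGroup V] [Module k V]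
    {f p q : Module.End k V} {a b c : k} (hp : p * f = a • p) (hq : q * f = b • q)
    {z : V ⊗[k] V} (hz : TensorProduct.map f f z = c • z) (hne : TensorProduct.map p q z ≠ 0) :
    a * b = c := by
  have h := congrArg (TensorProduct.map p q) hz
  rw [← LinearMap.comp_apply, ← TensorProduct.map_comp, map_smul] at h
  change TensorProduct.map (p * f) (q * f) z = _ at h
  rw [hp, hq, TensorProduct.map_smul_left, TensorProduct.map_smul_right, smul_smul] at h
  exact smul_left_injective k hne h

/-- Lemma 4.1. Let `H` be a Hopf algebra of odd index `n` over an
algebraically closed field of characteristic `0`, `ω` a primitive `n`-th root of unity,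
`g` and `α` the distinguished group-like elements of `H` and `H*`, and `x` an integer with
`α(g) = ω^x`. If `Λ` is a left integral of `H`, then
`Δ(Λ) ∈ Σ_{𝐚 ∈ ℤ/2 × ℤ/n × ℤ/n} H^ω_𝐚 ⊗ H^ω_{−𝐚+(0,−x,x)}`. -/
theorem stmt11 (k : Type*) [Field k] [IsAlgClosed k] [CharZero k]
    (n : ℕ) (hn : Odd n)
    (H : Type*) [Ring H] [HopfAlgebra k H] [FiniteDimensional k H]
    (g : H) (hg : IsDistinguishedGroupLike k g) (hidx : IsHopfIndex k g n)
    (α : H →ₐ[k] k) (hα : IsDistinguishedGroupLikeDual k α)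
    (ω : k) (hω : IsPrimitiveRoot ω n)
    (x : ℤ) (hx : α g = ω ^ x)
    (Λ : H) (hΛ : IsLeftIntegral k Λ) :
    Coalgebra.comul (R := k) Λ ∈
      ⨆ t : ZMod 2 × ZMod n × ZMod n,
        LinearMap.range (TensorProduct.mapIncl (hopfEigenspace g ω t)
          (hopfEigenspace g ω
            (-t + ((0 : ZMod 2), ((-x : ℤ) : ZMod n), ((x : ℤ) : ZMod n))))) := by
  obtain ⟨hn0, hS4, hgn, -⟩ := hidx
  have : NeZero n := ⟨hn0.ne'⟩
  have hω0 : ω ≠ 0 := hω.ne_zero hn0.ne'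
  have hg' := hg.1.isGroupLikeElem_s11
  set S : Module.End k H := HopfAlgebra.antipode (R := k) (A := H) with hSdef
  have hS : Function.Injective (HopfAlgebra.antipode k (A := H)) := by
    have h1 : S ^ (4 * n - 1) * S = 1 := by rw [← pow_succ, Nat.sub_add_cancel (by omega), hS4]
    exact Function.LeftInverse.injective (g := ⇑(S ^ (4 * n - 1))) fun u => LinearMap.congr_fun h1 u
  obtain ⟨L, hL0, hL, hLα⟩ := hα
  have hΛα (a : H) : Λ * a = α a • Λ := by
    obtain ⟨-, l, hl0, hl, -⟩ := hg
    rw [hL.exists_eq_smul hS hl hl0 hL0 hΛ, smul_mul_assoc, hLα, smul_comm]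
  set A : Module.End k H := S ^ 2 with hA
  set B : Module.End k H := LinearMap.mulRight k g with hB
  have hAz : TensorProduct.map A A (Coalgebra.comul (R := k) Λ) =
      (α g)⁻¹ • Coalgebra.comul (R := k) Λ := by
    rw [← map_smul, ← hΛ.antipode_antipode hS hg hΛα, comul_antipode_antipode, hA, pow_two]
    rfl
  have hBz : TensorProduct.map B B (Coalgebra.comul (R := k) Λ) =
      α g • Coalgebra.comul (R := k) Λ := by
    rw [← map_smul, ← hΛα, Bialgebra.comul_mul, hg'.comul_eq_tmul_self]
    generalize Coalgebra.comul (R := k) Λ = z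
    induction z with
    | zero => simp
    | tmul u v => simp [hB]
    | add x y hx hy => simp [add_mul, hx, hy]
  have hAB : Commute A B := antipode_sq_commute_mulRight hg'
  have hA1 : A ^ Fintype.card (ZMod 2 × ZMod n) = 1 := by
    rw [Fintype.card_prod, ZMod.card, ZMod.card, hA, ← pow_mul, ← hS4]
    ring_nf
  have hB1 : B ^ Fintype.card (ZMod n) = 1 := by
    rw [ZMod.card, hB, LinearMap.pow_mulRight, hgn, LinearMap.mulRight_one]
    rfl
  obtain ⟨P, hP1, hPA, hPc⟩ := exists_eigenprojections
    (fun s : ZMod 2 × ZMod n => (-1 : k) ^ s.1.val * ω ^ s.2.val)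
    (injective_neg_one_pow_mul_pow_val hn hω)
    (fun s => by
      rw [Fintype.card_prod, ZMod.card, ZMod.card, mul_pow, pow_right_comm (-1 : k),
        pow_right_comm ω, (even_two_mul n).neg_one_pow, mul_comm 2 n, pow_mul ω, hω.pow_eq_one]
      simp)
    A hA1
  obtain ⟨Q, hQ1, hQB, hQc⟩ := exists_eigenprojections
    (fun j : ZMod n => ω ^ j.val)
    (fun i j h => by
      have := @injective_neg_one_pow_mul_pow_val k _ _ n ω hn hω (0, i) (0, j) (by simpa using h)
      simpa using this)
    (fun j => by rw [ZMod.card, pow_right_comm, hω.pow_eq_one, one_pow])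
    B hB1
  have hPB (s) : Commute B (P s) := hPc B hAB.symm s
  have hPQ (s j) : Commute (P s) (Q j) := hQc (P s) (hPB s).symm j
  have hPA' (s) : P s * A = ((-1 : k) ^ s.1.val * ω ^ s.2.val) • P s := by
    rw [← (hPc A (Commute.refl A) s).eq, hPA]
  have hQB' (j) : Q j * B = ω ^ j.val • Q j := by
    rw [← (hQc B (Commute.refl B) j).eq, hQB]
  let p (t : ZMod 2 × ZMod n × ZMod n) : Module.End k H := P (t.1, t.2.1) * Q t.2.2
  have hpA (t) : p t * A = ((-1 : k) ^ t.1.val * ω ^ t.2.1.val) • p t := by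
    simp only [p]
    rw [(hPQ _ _).eq, mul_assoc, hPA', mul_smul_comm]
  have hpB (t) : p t * B = ω ^ t.2.2.val • p t := by
    simp only [p]
    rw [mul_assoc, hQB', mul_smul_comm]
  have hpmem (t) (u : H) : p t u ∈ hopfEigenspace g ω t := by
    refine ⟨Module.End.mem_eigenspace_iff.2 ?_, Module.End.mem_eigenspace_iff.2 ?_⟩
    · have h : A * p t = ((-1 : k) ^ t.1.val * ω ^ t.2.1.val) • p t := by
        simp only [p]
        rw [← mul_assoc, hPA, smul_mul_assoc]
      exact LinearMap.congr_fun h u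
    · have h : B * p t = ω ^ t.2.2.val • p t := by
        simp only [p]
        rw [(hPQ _ _).eq, ← mul_assoc, hQB, smul_mul_assoc]
      exact LinearMap.congr_fun h u
  have hp1 : ∑ t, p t = 1 := by
    simp only [p, Fintype.sum_prod_type, ← Finset.mul_sum, hQ1, mul_one]
    rw [← hP1, Fintype.sum_prod_type]
  have hdecomp : Coalgebra.comul (R := k) Λ =
      ∑ t, ∑ s, TensorProduct.map (p t) (p s) (Coalgebra.comul (R := k) Λ) := by
    have h : TensorProduct.map (∑ t, p t) (∑ s, p s) (Coalgebra.comul (R := k) Λ) =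
        Coalgebra.comul (R := k) Λ := by
      rw [hp1]
      exact LinearMap.congr_fun TensorProduct.map_one _
    conv_lhs => rw [← h]
    generalize Coalgebra.comul (R := k) Λ = z
    induction z with
    | zero => simp
    | tmul u v =>
      simp only [TensorProduct.map_tmul, LinearMap.sum_apply, TensorProduct.sum_tmul,
        TensorProduct.tmul_sum]
      exact Finset.sum_comm
    | add x y hx hy => simp only [map_add, hx, hy, Finset.sum_add_distrib]
  rw [hdecomp]
  refine Submodule.sum_mem _ fun t _ => Submodule.sum_mem _ fun s _ => ?_
  by_cases hne : TensorProduct.map (p t) (p s) (Coalgebra.comul (R := k) Λ) = 0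
  · rw [hne]
    exact Submodule.zero_mem _
  have hs : s = -t + ((0 : ZMod 2), ((-x : ℤ) : ZMod n), ((x : ℤ) : ZMod n)) := by
    have h1 := mul_eq_of_map_ne_zero (hpA t) (hpA s) hAz hne
    have h2 := mul_eq_of_map_ne_zero (hpB t) (hpB s) hBz hne
    rw [hx] at h1 h2
    have h1' : (-1 : k) ^ (t.1.val + s.1.val) * ω ^ ((t.2.1.val : ℤ) + s.2.1.val + x) = 1 := by
      rw [pow_add, zpow_add₀ hω0, zpow_add₀ hω0, zpow_natCast, zpow_natCast]
      calc _ = ((-1 : k) ^ t.1.val * ω ^ t.2.1.val * ((-1) ^ s.1.val * ω ^ s.2.1.val)) * ω ^ x := by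
            ring
        _ = 1 := by rw [h1, inv_mul_cancel₀ (zpow_ne_zero _ hω0)]
    have h2' : (-1 : k) ^ 0 * ω ^ ((t.2.2.val : ℤ) + s.2.2.val - x) = 1 := by
      rw [pow_zero, one_mul, zpow_sub₀ hω0, zpow_add₀ hω0, zpow_natCast, zpow_natCast, h2,
        div_self (zpow_ne_zero _ hω0)]
    obtain ⟨ha, hi⟩ := even_and_dvd_of_neg_one_pow_mul_zpow_eq_one hn hω h1'
    obtain ⟨-, hj⟩ := even_and_dvd_of_neg_one_pow_mul_zpow_eq_one hn hω h2'
    rw [← ZMod.intCast_zmod_eq_zero_iff_dvd] at hi hj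
    push_cast at hi hj
    rw [ZMod.natCast_zmod_val, ZMod.natCast_zmod_val] at hi hj
    refine Prod.ext ?_ (Prod.ext ?_ ?_)
    · simp [ZMod.eq_of_even_val_add_val ha, ZMod.neg_eq_self_mod_two]
    · simp only [Prod.snd_add, Prod.fst_add, Prod.snd_neg, Prod.fst_neg, Int.cast_neg]
      linear_combination hi
    · simp only [Prod.snd_add, Prod.snd_neg]
      linear_combination hj
  subst hs
  exact Submodule.mem_iSup_of_mem t (TensorProduct.map_mem_range_mapIncl (hpmem t) (hpmem _) _)
end
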